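/- If G is a k-chromatic graph of order n with a vertex of degree n−1 and x ≥ k is a natural number, then π(G,x) = (x)_↓k·(x−1)^(n−k) holds if and only if G is a connected k-chromatic graph of order n with exactly C(k,2)+n−k edges and clique number k. -/

import Mathlib

/-- The number of proper `x`-colourings of `G`. -/
noncomputable def numColorings {V : Type} [Fintype V] (G : SimpleGraph V) (x : ℕ) : ℕ :=
  Nat.card {f : V → Fin x // ∀ ⦃u w : V⦄, G.Adj u w → f u ≠ f w}

/-!
Fix a vertex `u` of degree at least `k - 1` in a graph that needs `k` colours and sum over the
colour class `S` of `u`. Each `G - S` needs at least `k - 1` colours, so by induction and a binomial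
sum over the sets of non-neighbours of `u`, a graph of order `n` with chromatic number at least `k`
has at most `(y)_↓k * y ^ (n - k)` colourings with `y` colours. Equality forces `deg u = k - 1` and
equality for `G - u`, hence `G` is `K_k` together with isolated vertices.

If `u` is universal, its colour is used nowhere else, so colourings of `G` with `x` colours are `x`
times the colourings of `G - u` with `x - 1` colours, and the above applies to `G - u`.
-/

open Finset SimpleGraph

section Counting

variable {V α : Type*} {G : SimpleGraph V}

/-- Bundled colourings as functions, the form in which `numColorings` counts them. -/
def coloringEquivSubtype (G : SimpleGraph V) (α : Type*) :
    G.Coloring α ≃ {f : V → α // ∀ ⦃u w : V⦄, G.Adj u w → f u ≠ f w} where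
  toFun c := ⟨c, fun _ _ h => c.valid h⟩
  invFun f := Coloring.mk f.1 fun {_ _} h => f.2 h
  left_inv _ := rfl
  right_inv _ := rfl

lemma numColorings_eq_card_coloring {V : Type} [Fintype V] (G : SimpleGraph V) (x : ℕ) :
    numColorings G x = Nat.card (G.Coloring (Fin x)) :=
  (Nat.card_congr (coloringEquivSubtype G (Fin x))).symm

lemma card_coloring_ne_zero_iff [Finite V] [Finite α] :
    Nat.card (G.Coloring α) ≠ 0 ↔ Nonempty (G.Coloring α) := by
  have : Finite (G.Coloring α) := DFunLike.finite _
  rw [Nat.card_ne_zero, and_iff_left this]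

lemma card_coloring_le_pow [Finite V] (G : SimpleGraph V) (y : ℕ) :
    Nat.card (G.Coloring (Fin y)) ≤ y ^ Nat.card V := by
  simpa [Nat.card_fun] using
    Nat.card_le_card_of_injective (fun c : G.Coloring (Fin y) => (c : V → Fin y))
      DFunLike.coe_injective

lemma eq_bot_of_card_coloring_eq_pow [Finite V] {y : ℕ} (hy : 0 < y)
    (h : Nat.card (G.Coloring (Fin y)) = y ^ Nat.card V) : G = ⊥ := by
  have hbij := (DFunLike.coe_injective (F := G.Coloring (Fin y))).bijective_of_nat_card_le
    (by simp [h, Nat.card_fun])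
  obtain ⟨c, hc⟩ := hbij.surjective fun _ => ⟨0, hy⟩
  rw [eq_bot_iff_forall_not_adj]
  intro a b hab
  exact c.valid hab (by rw [hc])

/-- Colourings in which the colour `a` is used exactly on the independent set `S`, viewed as
colourings of `G - S` with the remaining colours. -/
noncomputable def colorClassEquiv (a : α) {S : Set V} (hS : G.IsIndepSet S) :
    {c : G.Coloring α // c.colorClass a = S} ≃ (G.induce Sᶜ).Coloring {b // b ≠ a} := by
  classical exact
  { toFun c := Coloring.mk (fun v => ⟨c.1 v, fun h => v.2 (c.2.subset h)⟩)
      fun {_ _} h he => c.1.valid h (congrArg Subtype.val he)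
    invFun d :=
      ⟨Coloring.mk (fun v => if hv : v ∈ S then a else d ⟨v, hv⟩) (by
        intro v w hvw
        by_cases hv : v ∈ S <;> by_cases hw : w ∈ S
        · exact absurd hvw (hS hv hw hvw.ne)
        · simpa [hv, hw] using (d ⟨w, hw⟩).2.symm
        · simpa [hv, hw] using (d ⟨v, hv⟩).2
        · simpa [hv, hw, Subtype.ext_iff] using
            d.valid (v := ⟨v, hv⟩) (w := ⟨w, hw⟩) hvw), by
        ext v
        change (if hv : v ∈ S then a else d ⟨v, hv⟩) = a ↔ v ∈ S
        by_cases hv : v ∈ S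
        · simp [hv]
        · simpa [hv] using (d ⟨v, hv⟩).2⟩
    left_inv := by
      rintro ⟨c, rfl⟩
      ext v
      change (if _hv : c v = a then a else c v) = c v
      split_ifs with hv
      exacts [hv.symm, rfl]
    right_inv d := by
      ext ⟨v, hv⟩
      exact dif_neg hv }

/-- `colorClassEquiv` for colourings with `z + 1` colours, the `z` remaining ones renamed. -/
noncomputable def colorClassEquivFin {z : ℕ} (i : Fin (z + 1)) {S : Set V}
    (hS : G.IsIndepSet S) :
    {c : G.Coloring (Fin (z + 1)) // c.colorClass i = S} ≃ (G.induce Sᶜ).Coloring (Fin z) :=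
  (colorClassEquiv i hS).trans ((G.induce Sᶜ).recolorOfEquiv (finSuccAboveEquiv i).symm)

lemma colorable_succ_of_isIndepSet {z : ℕ} {S : Set V} (hS : G.IsIndepSet S)
    (h : (G.induce Sᶜ).Colorable z) : G.Colorable (z + 1) :=
  Nonempty.map (fun c => ((colorClassEquivFin 0 hS).symm c).1) h

lemma le_chromaticNumber_induce_compl {j : ℕ} {S : Set V} (hS : G.IsIndepSet S)
    (h : (j + 1 : ℕ) ≤ G.chromaticNumber) : j ≤ (G.induce Sᶜ).chromaticNumber := by
  rw [le_chromaticNumber_iff_colorable] at h ⊢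
  intro m hm
  exact Nat.le_of_succ_le_succ (h _ (colorable_succ_of_isIndepSet hS hm))

/-- The independent sets containing `u`: the possible colour classes of `u`. -/
def indepSetsContaining [Fintype V] [DecidableEq V] (G : SimpleGraph V) [DecidableRel G.Adj]
    (u : V) : Finset (Finset V) :=
  {S : Finset V | u ∈ S ∧ G.IsIndepSet S}

lemma mem_indepSetsContaining [Fintype V] [DecidableEq V] [DecidableRel G.Adj] {u : V}
    {S : Finset V} : S ∈ indepSetsContaining G u ↔ u ∈ S ∧ G.IsIndepSet S := by
  simp [indepSetsContaining]

lemma indepSetsContaining_of_isUniversal [Fintype V] [DecidableEq V] [DecidableRel G.Adj]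
    {u : V} (hu : G.IsUniversal u) : indepSetsContaining G u = {{u}} := by
  ext S
  rw [mem_indepSetsContaining, mem_singleton]
  refine ⟨fun ⟨huS, hS⟩ => eq_singleton_iff_unique_mem.2 ⟨huS, fun v hv => ?_⟩, ?_⟩
  · by_contra hvu
    exact hS huS hv (Ne.symm hvu) (hu (Ne.symm hvu))
  · rintro rfl
    simp

/-- Split the colourings according to the colour of `u` and the colour class `S` of `u`. -/
theorem card_coloring_fin_succ [Fintype V] [DecidableEq V] [DecidableRel G.Adj] (u : V) (z : ℕ) :
    Nat.card (G.Coloring (Fin (z + 1))) = (z + 1) *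
      ∑ S ∈ indepSetsContaining G u,
        Nat.card ((G.induce (S : Set V)ᶜ).Coloring (Fin z)) := by
  classical
  let I := {S // S ∈ indepSetsContaining G u}
  let split (c : G.Coloring (Fin (z + 1))) : Fin (z + 1) × I :=
    (c u, ⟨(c.colorClass (c u)).toFinset, mem_indepSetsContaining.2
      ⟨by simpa using c.mem_colorClass u, by simpa using c.isIndepSet_colorClass (c u)⟩⟩)
  have hsplit (i : Fin (z + 1)) (S : I) (c) :
      split c = (i, S) ↔ c.colorClass i = (S.1 : Set V) := by
    have hmem : c.colorClass i = (S.1 : Set V) → c u = i := fun h =>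
      h.symm.subset (mem_coe.2 (mem_indepSetsContaining.1 S.2).1)
    rw [Prod.mk.injEq, ← Subtype.coe_inj, ← coe_inj, Set.coe_toFinset]
    exact ⟨fun h => h.1 ▸ h.2, fun h => ⟨hmem h, (hmem h).symm ▸ h⟩⟩
  have hfiber (p : Fin (z + 1) × I) : Nat.card {c // split c = p} =
      Nat.card ((G.induce (p.2.1 : Set V)ᶜ).Coloring (Fin z)) :=
    Nat.card_congr ((Equiv.subtypeEquivRight (hsplit p.1 p.2)).trans
      (colorClassEquivFin p.1 (mem_indepSetsContaining.1 p.2.2).2))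
  have : Finite (G.Coloring (Fin (z + 1))) := DFunLike.finite _
  rw [← Nat.card_congr (Equiv.sigmaFiberEquiv split), Nat.card_sigma,
    sum_congr rfl fun p _ => hfiber p]
  simp only [Fintype.sum_prod_type, sum_const, card_univ, Fintype.card_fin, smul_eq_mul]
  rw [sum_coe_sort (indepSetsContaining G u) fun S : Finset V =>
    Nat.card ((G.induce (S : Set V)ᶜ).Coloring (Fin z))]

theorem card_coloring_fin_succ_of_isUniversal [Finite V] {u : V} (hu : G.IsUniversal u) (z : ℕ) :
    Nat.card (G.Coloring (Fin (z + 1))) =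
      (z + 1) * Nat.card ((G.induce {u}ᶜ).Coloring (Fin z)) := by
  classical
  cases nonempty_fintype V
  rw [card_coloring_fin_succ u, indepSetsContaining_of_isUniversal hu, sum_singleton, coe_singleton]

lemma colorable_succ_iff_of_isUniversal [Finite V] {u : V} (hu : G.IsUniversal u) (z : ℕ) :
    G.Colorable (z + 1) ↔ (G.induce {u}ᶜ).Colorable z := by
  rw [Colorable, Colorable, ← card_coloring_ne_zero_iff, ← card_coloring_ne_zero_iff,
    card_coloring_fin_succ_of_isUniversal hu]
  simp

end Counting

section CompleteOn

variable {V : Type*} {G : SimpleGraph V}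

/-- The complete graph on `s` together with isolated vertices outside `s`. -/
def completeOn (s : Set V) : SimpleGraph V := (⊤ : SimpleGraph s).spanningCoe

lemma completeOn_adj {s : Set V} {a b : V} :
    (completeOn s).Adj a b ↔ a ∈ s ∧ b ∈ s ∧ a ≠ b := by
  simp only [completeOn, map_adj, top_adj]
  aesop

lemma completeOn_of_subsingleton {s : Set V} (hs : s.Subsingleton) : completeOn s = ⊥ := by
  ext a b
  simpa only [completeOn_adj, bot_adj, iff_false] using fun ⟨ha, hb, hab⟩ => hab (hs ha hb)

lemma completeOn_le_iff {s : Set V} : completeOn s ≤ G ↔ G.IsClique s :=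
  ⟨fun h _ ha _ hb hab => h (completeOn_adj.2 ⟨ha, hb, hab⟩),
    fun h _ _ hab => let ⟨ha, hb, hne⟩ := completeOn_adj.1 hab; h ha hb hne⟩

lemma colorable_completeOn {K : Finset V} {n : ℕ} (hn : n ≠ 0) (hK : #K ≤ n) :
    (completeOn (K : Set V)).Colorable n := by
  have : NeZero n := ⟨hn⟩
  exact (Colorable.mono (by simpa using hK) (colorable_of_fintype (⊤ : SimpleGraph K))).map _

lemma card_edgeFinset_completeOn [Fintype V] (K : Finset V)
    [DecidableRel (completeOn (K : Set V)).Adj] :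
    #(completeOn (K : Set V)).edgeFinset = (#K).choose 2 := by
  classical
  have := card_edgeFinset_map (Function.Embedding.subtype (· ∈ K)) (⊤ : SimpleGraph K)
  rw [card_edgeFinset_top_eq_card_choose_two, Fintype.card_coe] at this
  rw [← this]
  congr!

lemma eq_completeOn_iff [Fintype V] [DecidableRel G.Adj] {K : Finset V} :
    G = completeOn (K : Set V) ↔ #G.edgeFinset = (#K).choose 2 ∧ G.IsClique K := by
  classical
  constructor
  · rintro rfl
    exact ⟨card_edgeFinset_completeOn K, completeOn_le_iff.1 le_rfl⟩
  · rintro ⟨hcard, hK⟩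
    have hle := edgeFinset_subset_edgeFinset.2 (completeOn_le_iff.2 hK)
    exact (edgeFinset_inj.1 (eq_of_subset_of_card_le hle
      (by rw [hcard, card_edgeFinset_completeOn]))).symm

theorem card_coloring_completeOn [Finite V] (K : Finset V) (y : ℕ) :
    Nat.card ((completeOn (K : Set V)).Coloring (Fin y)) =
      y.descFactorial #K * y ^ (Nat.card V - #K) := by
  classical
  cases nonempty_fintype V
  let e := Equiv.piEquivPiSubtypeProd (· ∈ K) fun _ : V => Fin y
  have he (f : V → Fin y) : (∀ ⦃u w⦄, (completeOn (K : Set V)).Adj u w → f u ≠ f w) ↔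
      Function.Injective (e f).1 := by
    simp only [completeOn_adj, mem_coe]
    exact ⟨fun h a b hab => by_contra fun hne => h ⟨a.2, b.2, Subtype.coe_ne_coe.2 hne⟩ hab,
      fun h u w huw he => huw.2.2 (congrArg Subtype.val (@h ⟨u, huw.1⟩ ⟨w, huw.2.1⟩ he))⟩
  calc Nat.card ((completeOn (K : Set V)).Coloring (Fin y))
      = Nat.card ((K ↪ Fin y) × ({v // v ∉ K} → Fin y)) :=
        Nat.card_congr <| (coloringEquivSubtype _ _).trans <| (e.subtypeEquiv he).trans <|
          (Equiv.prodSubtypeFstEquivSubtypeProd (p := Function.Injective)).trans <|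
            (Equiv.subtypeInjectiveEquivEmbedding K (Fin y)).prodCongr (Equiv.refl _)
    _ = y.descFactorial #K * y ^ (Nat.card V - #K) := by
        rw [Nat.card_prod, Nat.card_eq_fintype_card, Fintype.card_embedding_eq, Nat.card_fun,
          Nat.card_eq_fintype_card (α := {v // v ∉ K}), Fintype.card_subtype_compl]
        simp

end CompleteOn

section Degree

variable {V : Type*} {G : SimpleGraph V} [Fintype V] [DecidableRel G.Adj]

theorem colorable_of_forall_degree_lt {j : ℕ} (h : ∀ v, G.degree v < j) : G.Colorable j := by
  classical
  suffices hpartial : ∀ A : Finset V, ∃ c : V → Fin j, ∀ u ∈ A, ∀ w ∈ A, G.Adj u w → c u ≠ c w by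
    obtain ⟨c, hc⟩ := hpartial univ
    exact ⟨Coloring.mk c fun {u w} => hc u (mem_univ u) w (mem_univ w)⟩
  intro A
  induction A using Finset.induction_on with
  | empty => exact ⟨fun v => ⟨0, (h v).pos⟩, by simp⟩
  | insert a A _ ih =>
    obtain ⟨c, hc⟩ := ih
    obtain ⟨i, hi⟩ : ∃ i, i ∉ (G.neighborFinset a).image c := by
      by_contra! hall
      have := (Finset.card_le_card fun i _ => hall i : #(univ : Finset (Fin j)) ≤ _).trans
        card_image_le
      rw [card_univ, Fintype.card_fin, card_neighborFinset_eq_degree] at this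
      exact (h a).not_ge this
    have hfree {w : V} (hw : G.Adj a w) : c w ≠ i := fun he =>
      hi (mem_image.2 ⟨w, by simpa using hw, he⟩)
    refine ⟨Function.update c a i, fun u hu w hw huw => ?_⟩
    rcases eq_or_ne u a with rfl | hua
    · simpa [huw.ne'] using (hfree huw).symm
    rcases eq_or_ne w a with rfl | hwa
    · simpa [hua] using hfree huw.symm
    · simpa [hua, hwa] using
        hc u (mem_of_mem_insert_of_ne hu hua) w (mem_of_mem_insert_of_ne hw hwa) huw

lemma exists_le_degree_of_not_colorable {j : ℕ} (h : ¬ G.Colorable j) : ∃ u, j ≤ G.degree u := by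
  contrapose! h
  exact colorable_of_forall_degree_lt h

variable [DecidableEq V]

lemma indepSetsContaining_subset_image (u : V) :
    indepSetsContaining G u ⊆
      (insert u (G.neighborFinset u))ᶜ.powerset.image (insert u) := by
  intro S hS
  obtain ⟨huS, hS⟩ := mem_indepSetsContaining.1 hS
  refine mem_image.2 ⟨S.erase u, mem_powerset.2 fun v hv => ?_, insert_erase huS⟩
  obtain ⟨hvu, hvS⟩ := mem_erase.1 hv
  simpa [hvu] using hS huS hvS hvu.symm

lemma sum_indepSetsContaining_pow_le {u : V} {j : ℕ} (hj : j ≤ G.degree u) (z : ℕ) :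
    ∑ S ∈ indepSetsContaining G u, z ^ (Fintype.card V - #S - j) ≤
      z ^ (G.degree u - j) * (z + 1) ^ (Fintype.card V - 1 - G.degree u) := by
  let W := (insert u (G.neighborFinset u))ᶜ
  have hW : #W = Fintype.card V - 1 - G.degree u := by
    rw [card_compl, card_insert_of_notMem (by simp), card_neighborFinset_eq_degree,
      Nat.sub_sub, Nat.add_comm]
  have hdeg := G.degree_lt_card_verts u
  calc ∑ S ∈ indepSetsContaining G u, z ^ (Fintype.card V - #S - j)
      ≤ ∑ S ∈ W.powerset.image (insert u), z ^ (Fintype.card V - #S - j) :=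
        sum_le_sum_of_subset (indepSetsContaining_subset_image u)
    _ ≤ ∑ T ∈ W.powerset, z ^ (Fintype.card V - #(insert u T) - j) :=
        sum_image_le_of_nonneg (by simp)
    _ = ∑ T ∈ W.powerset, z ^ (G.degree u - j) * (1 ^ #T * z ^ (#W - #T)) := by
        refine sum_congr rfl fun T hT => ?_
        have hTW := card_le_card (mem_powerset.1 hT)
        rw [card_insert_of_notMem fun h => by simpa [W] using mem_powerset.1 hT h, one_pow, one_mul,
          ← pow_add]
        congr 1
        omega
    _ = z ^ (G.degree u - j) * (z + 1) ^ (Fintype.card V - 1 - G.degree u) := by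
        rw [← mul_sum, sum_pow_mul_eq_add_pow, hW, Nat.add_comm 1]

lemma sum_indepSetsContaining_pow_lt_pow {u : V} {j : ℕ} (hj : j < G.degree u) (z : ℕ) :
    ∑ S ∈ indepSetsContaining G u, z ^ (Fintype.card V - #S - j) <
      (z + 1) ^ (Fintype.card V - 1 - j) := by
  have hdeg := G.degree_lt_card_verts u
  calc ∑ S ∈ indepSetsContaining G u, z ^ (Fintype.card V - #S - j)
      ≤ z ^ (G.degree u - j) * (z + 1) ^ (Fintype.card V - 1 - G.degree u) :=
        sum_indepSetsContaining_pow_le hj.le z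
    _ < (z + 1) ^ (G.degree u - j) * (z + 1) ^ (Fintype.card V - 1 - G.degree u) := by
        gcongr
        · omega
        · omega
    _ = (z + 1) ^ (Fintype.card V - 1 - j) := by
        rw [← pow_add]
        congr 1
        omega

lemma sum_indepSetsContaining_pow_le_pow {u : V} {j : ℕ} (hj : j ≤ G.degree u) (z : ℕ) :
    ∑ S ∈ indepSetsContaining G u, z ^ (Fintype.card V - #S - j) ≤
      (z + 1) ^ (Fintype.card V - 1 - j) := by
  rcases hj.lt_or_eq with hj | rfl
  · exact (sum_indepSetsContaining_pow_lt_pow hj z).le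
  · simpa using sum_indepSetsContaining_pow_le le_rfl z

end Degree

section Bound

variable {V : Type*} {G : SimpleGraph V}

lemma natCard_coe_compl [Fintype V] (S : Finset V) :
    Nat.card ((S : Set V)ᶜ : Set V) = Fintype.card V - #S := by
  classical
  rw [← coe_compl, Nat.card_coe_set_eq, Set.ncard_coe_finset, card_compl]

theorem card_coloring_le_of_le_chromaticNumber [Finite V] {j : ℕ}
    (h : j ≤ G.chromaticNumber) (y : ℕ) :
    Nat.card (G.Coloring (Fin y)) ≤ y.descFactorial j * y ^ (Nat.card V - j) := by
  classical
  induction j generalizing V y with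
  | zero => simpa using card_coloring_le_pow G y
  | succ j ih =>
    have hcol {m : ℕ} (hm : G.Colorable m) : j + 1 ≤ m :=
      le_chromaticNumber_iff_colorable.1 h m hm
    cases y with
    | zero =>
      have hzero : Nat.card (G.Coloring (Fin 0)) = 0 := by
        by_contra hne
        exact absurd (hcol (card_coloring_ne_zero_iff.1 hne)) (Nat.not_succ_le_zero j)
      exact hzero.trans_le (Nat.zero_le _)
    | succ z =>
      cases nonempty_fintype V
      obtain ⟨u, hu⟩ := exists_le_degree_of_not_colorable
        fun hc => (hcol hc).not_gt j.lt_succ_self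
      calc Nat.card (G.Coloring (Fin (z + 1)))
          = (z + 1) * ∑ S ∈ indepSetsContaining G u,
              Nat.card ((G.induce (S : Set V)ᶜ).Coloring (Fin z)) := card_coloring_fin_succ u z
        _ ≤ (z + 1) * ∑ S ∈ indepSetsContaining G u,
              z.descFactorial j * z ^ (Fintype.card V - #S - j) := by
            gcongr with S hS
            rw [← natCard_coe_compl]
            exact ih (le_chromaticNumber_induce_compl (mem_indepSetsContaining.1 hS).2 h) z
        _ ≤ (z + 1) * (z.descFactorial j * (z + 1) ^ (Fintype.card V - 1 - j)) := by
            rw [← mul_sum]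
            gcongr
            exact sum_indepSetsContaining_pow_le_pow hu z
        _ = (z + 1).descFactorial (j + 1) * (z + 1) ^ (Nat.card V - (j + 1)) := by
            rw [Nat.succ_descFactorial_succ, mul_assoc, Nat.card_eq_fintype_card, Nat.sub_sub,
              Nat.add_comm 1]

/-- Equality in `card_coloring_le_of_le_chromaticNumber` passes to `G - u`. -/
lemma degree_eq_and_card_coloring_eq [Fintype V] [DecidableRel G.Adj] {u : V} {j z : ℕ}
    (hG : (j + 1 : ℕ) ≤ G.chromaticNumber) (hu : j ≤ G.degree u) (hz : j ≤ z)
    (h : Nat.card (G.Coloring (Fin (z + 1))) =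
      (z + 1).descFactorial (j + 1) * (z + 1) ^ (Nat.card V - (j + 1))) :
    G.degree u = j ∧ Nat.card ((G.induce {u}ᶜ).Coloring (Fin z)) =
      z.descFactorial j * z ^ (Nat.card ({u}ᶜ : Set V) - j) := by
  classical
  have hpos : 0 < z.descFactorial j := Nat.descFactorial_pos.2 hz
  have hle : ∀ S ∈ indepSetsContaining G u,
      Nat.card ((G.induce (S : Set V)ᶜ).Coloring (Fin z)) ≤
        z.descFactorial j * z ^ (Fintype.card V - #S - j) := fun S hS => by
    rw [← natCard_coe_compl]
    exact card_coloring_le_of_le_chromaticNumber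
      (le_chromaticNumber_induce_compl (mem_indepSetsContaining.1 hS).2 hG) z
  have hsum : ∑ S ∈ indepSetsContaining G u,
      Nat.card ((G.induce (S : Set V)ᶜ).Coloring (Fin z)) =
        z.descFactorial j * (z + 1) ^ (Fintype.card V - 1 - j) := by
    rw [card_coloring_fin_succ u, Nat.succ_descFactorial_succ, mul_assoc] at h
    rw [Nat.eq_of_mul_eq_mul_left z.succ_pos h, Nat.card_eq_fintype_card, Nat.sub_sub,
      Nat.add_comm 1]
  have hge : z.descFactorial j * (z + 1) ^ (Fintype.card V - 1 - j) ≤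
      z.descFactorial j * ∑ S ∈ indepSetsContaining G u, z ^ (Fintype.card V - #S - j) := by
    rw [← hsum, mul_sum]
    exact sum_le_sum hle
  constructor
  · by_contra hne
    have hlt := sum_indepSetsContaining_pow_lt_pow (hu.lt_of_ne' hne) z
    exact hlt.not_ge (Nat.le_of_mul_le_mul_left hge hpos)
  · have hall := (sum_eq_sum_iff_of_le hle).1 <| (sum_le_sum hle).antisymm <| by
      rw [hsum, ← mul_sum]
      gcongr
      exact sum_indepSetsContaining_pow_le_pow hu z
    have := hall {u} (mem_indepSetsContaining.2 (by simp))
    rwa [← natCard_coe_compl, coe_singleton] at this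

end Bound

section Equality

variable {V : Type*} {G : SimpleGraph V}

lemma card_edgeFinset_eq_degree_add [Fintype V] [DecidableEq V] [DecidableRel G.Adj] (u : V) :
    #G.edgeFinset = G.degree u + #(G.induce {u}ᶜ).edgeFinset := by
  rw [card_edgeFinset_induce_compl_singleton, card_edgeFinset_deleteIncidenceSet,
    Nat.add_sub_cancel' (G.degree_le_card_edgeFinset u)]

/-- If `u` missed a vertex `a` of the clique `K`, then giving `u` and `a` a common colour would
leave a clique of size `#K - 1` plus isolated vertices, and `#K` colours would suffice for `G`. -/
lemma adj_of_induce_compl_eq_completeOn {u : V} {K : Finset ({u}ᶜ : Set V)}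
    (hK : G.induce {u}ᶜ = completeOn (K : Set ({u}ᶜ : Set V))) (hcol : ¬ G.Colorable #K)
    (hcard : 1 < #K) {a : ({u}ᶜ : Set V)} (ha : a ∈ K) : G.Adj u a := by
  classical
  by_contra hua
  have hind : G.IsIndepSet {u, (a : V)} := by
    rintro v (rfl | rfl) w (rfl | rfl) hvw
    exacts [absurd rfl hvw, hua, fun h => hua h.symm, absurd rfl hvw]
  have hsub : ({u, (a : V)}ᶜ : Set V) ⊆ {u}ᶜ :=
    Set.compl_subset_compl.2 (Set.singleton_subset_iff.2 (Set.mem_insert _ _))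
  have hne (v : ({u, (a : V)}ᶜ : Set V)) : Set.inclusion hsub v ≠ a := fun h =>
    v.2 (Or.inr (congrArg Subtype.val h))
  let f : G.induce {u, (a : V)}ᶜ →g completeOn (K.erase a : Set ({u}ᶜ : Set V)) :=
    { toFun := Set.inclusion hsub
      map_rel' {v w} hvw := by
        obtain ⟨hv, hw, hvw⟩ := completeOn_adj.1 <| hK.le <|
          show (G.induce {u}ᶜ).Adj (Set.inclusion hsub v) (Set.inclusion hsub w) from hvw
        exact completeOn_adj.2
          ⟨mem_erase.2 ⟨hne v, hv⟩, mem_erase.2 ⟨hne w, hw⟩, hvw⟩ }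
  have hrest : (G.induce {u, (a : V)}ᶜ).Colorable (#K - 1) :=
    (colorable_completeOn (by omega) (card_erase_of_mem ha).le).of_hom f
  exact hcol (Nat.sub_add_cancel hcard.le ▸ colorable_succ_of_isIndepSet hind hrest)

lemma exists_eq_completeOn_of_induce_compl [Fintype V] [DecidableRel G.Adj] {u : V}
    {K : Finset ({u}ᶜ : Set V)} (hK : G.induce {u}ᶜ = completeOn (K : Set ({u}ᶜ : Set V)))
    (hdeg : G.degree u = #K) (hcol : ¬ G.Colorable #K) :
    ∃ L : Finset V, #L = #K + 1 ∧ G = completeOn (L : Set V) := by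
  classical
  have hedges : #G.edgeFinset = (#K + 1).choose 2 := by
    rw [card_edgeFinset_eq_degree_add u, hdeg, (eq_completeOn_iff.1 hK).1,
      Nat.choose_succ_succ' #K 1, Nat.choose_one_right]
  obtain ⟨N, hN, hNK, hNu⟩ : ∃ N : Finset V, G.IsClique N ∧ #N = #K ∧ ∀ v ∈ N, G.Adj u v := by
    rcases le_or_gt #K 1 with hle | hlt
    · refine ⟨G.neighborFinset u, ?_, hdeg, by simp⟩
      exact Set.Subsingleton.pairwise (card_le_one.1 (hdeg.trans_le hle)) _
    · refine ⟨K.map (.subtype _), ?_, card_map _, fun v hv => ?_⟩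
      · simpa using isClique_induce_iff.1 (completeOn_le_iff.1 hK.ge)
      obtain ⟨a, ha, rfl⟩ := mem_map.1 hv
      exact adj_of_induce_compl_eq_completeOn hK hcol hlt ha
  have hL : #(insert u N) = #K + 1 := by
    rw [card_insert_of_notMem fun h => G.irrefl (hNu u h), hNK]
  refine ⟨insert u N, hL, eq_completeOn_iff.2 ⟨by rw [hedges, hL], ?_⟩⟩
  rw [coe_insert]
  exact hN.insert fun v hv _ => hNu v hv

theorem exists_eq_completeOn_of_card_coloring_eq [Finite V] {j y : ℕ} (hG : ¬ G.Colorable j)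
    (hy : j < y) (h : Nat.card (G.Coloring (Fin y)) =
      y.descFactorial (j + 1) * y ^ (Nat.card V - (j + 1))) :
    ∃ K : Finset V, #K = j + 1 ∧ G = completeOn (K : Set V) := by
  classical
  induction j generalizing V y with
  | zero =>
    obtain ⟨v⟩ : Nonempty V := not_isEmpty_iff.1 fun _ => hG (Colorable.of_isEmpty _)
    have : Nonempty V := ⟨v⟩
    have hV : Nat.card V - 1 + 1 = Nat.card V := Nat.sub_add_cancel Nat.card_pos
    rw [zero_add, Nat.descFactorial_one, ← pow_succ', hV] at h
    refine ⟨{v}, card_singleton v, ?_⟩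
    rw [eq_bot_of_card_coloring_eq_pow hy h, coe_singleton,
      completeOn_of_subsingleton Set.subsingleton_singleton]
  | succ j ih =>
    cases nonempty_fintype V
    obtain ⟨z, rfl⟩ : ∃ z, y = z + 1 := Nat.exists_eq_succ_of_ne_zero (by omega)
    obtain ⟨u, hu⟩ := exists_le_degree_of_not_colorable hG
    have hχ : (j + 1 + 1 : ℕ) ≤ G.chromaticNumber := le_chromaticNumber_iff_colorable.2
      fun m hm => Nat.lt_of_not_le fun hmj => hG (hm.mono hmj)
    obtain ⟨hdeg, hH⟩ := degree_eq_and_card_coloring_eq hχ hu (by omega) h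
    have hHcol : ¬ (G.induce {u}ᶜ).Colorable j := fun hc =>
      hG (colorable_succ_of_isIndepSet (by simp) hc)
    obtain ⟨K, hKcard, hK⟩ := ih hHcol (by omega) hH
    rw [← hKcard] at hdeg hG ⊢
    exact exists_eq_completeOn_of_induce_compl hK hdeg hG

theorem card_coloring_eq_iff_exists_eq_completeOn [Finite V] {j y : ℕ}
    (hG : G.chromaticNumber = j) (hy : j ≤ y) :
    Nat.card (G.Coloring (Fin y)) = y.descFactorial j * y ^ (Nat.card V - j) ↔
      ∃ K : Finset V, #K = j ∧ G = completeOn (K : Set V) := by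
  constructor
  · intro h
    cases j with
    | zero =>
      have : IsEmpty V := chromaticNumber_eq_zero_iff.1 (mod_cast hG)
      exact ⟨∅, card_empty, Subsingleton.elim _ _⟩
    | succ j =>
      refine exists_eq_completeOn_of_card_coloring_eq ?_ hy h
      exact (chromaticNumber_eq_iff_colorable_not_colorable.1 hG).2
  · rintro ⟨K, rfl, rfl⟩
    exact card_coloring_completeOn K y

lemma exists_eq_completeOn_iff [Fintype V] [DecidableRel G.Adj] {j : ℕ} (hG : G.Colorable j) :
    (∃ K : Finset V, #K = j ∧ G = completeOn (K : Set V)) ↔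
      #G.edgeFinset = j.choose 2 ∧ G.cliqueNum = j := by
  constructor
  · rintro ⟨K, rfl, hK⟩
    obtain ⟨hedges, hclique⟩ := eq_completeOn_iff.1 hK
    obtain ⟨L, hL⟩ := G.exists_isNClique_cliqueNum
    refine ⟨hedges, le_antisymm ?_ hclique.card_le_cliqueNum⟩
    exact hL.card_eq ▸ hL.isClique.card_le_of_colorable hG
  · rintro ⟨hedges, rfl⟩
    obtain ⟨K, hK⟩ := G.exists_isNClique_cliqueNum
    exact ⟨K, hK.card_eq, eq_completeOn_iff.2 ⟨by rw [hedges, hK.card_eq], hK.isClique⟩⟩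

theorem card_coloring_eq_iff_card_edgeFinset_cliqueNum [Fintype V] [DecidableRel G.Adj] {j y : ℕ}
    (hG : G.chromaticNumber = j) (hy : j ≤ y) :
    Nat.card (G.Coloring (Fin y)) = y.descFactorial j * y ^ (Nat.card V - j) ↔
      #G.edgeFinset = j.choose 2 ∧ G.cliqueNum = j := by
  rw [card_coloring_eq_iff_exists_eq_completeOn hG hy,
    exists_eq_completeOn_iff (chromaticNumber_le_iff_colorable.1 hG.le)]

end Equality

section Universal

variable {V : Type*} {G : SimpleGraph V}

lemma exists_chromaticNumber_induce_compl_of_isUniversal [Finite V] {u : V}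
    (hu : G.IsUniversal u) {k : ℕ} (h : G.chromaticNumber = k) :
    ∃ j, k = j + 1 ∧ (G.induce {u}ᶜ).chromaticNumber = j := by
  obtain ⟨j, rfl⟩ : ∃ j, k = j + 1 := Nat.exists_eq_succ_of_ne_zero <| by
    rintro rfl
    exact (chromaticNumber_eq_zero_iff.1 h).false u
  have hG := chromaticNumber_le_iff_colorable.1 h.le
  exact ⟨j, rfl, ((colorable_succ_iff_of_isUniversal hu j).1 hG).chromaticNumber_le.antisymm
    (le_chromaticNumber_induce_compl (by simp) h.ge)⟩

lemma cliqueNum_of_isUniversal [Finite V] {u : V} (hu : G.IsUniversal u) :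
    G.cliqueNum = (G.induce {u}ᶜ).cliqueNum + 1 := by
  classical
  apply le_antisymm
  · obtain ⟨K, hK⟩ := G.exists_isNClique_cliqueNum
    have hT : (G.induce {u}ᶜ).IsClique (K.subtype (· ∈ ({u}ᶜ : Set V))) := fun _ hv _ hw hvw =>
      hK.isClique (mem_subtype.1 hv) (mem_subtype.1 hw) (Subtype.coe_ne_coe.2 hvw)
    calc G.cliqueNum = #K := hK.card_eq.symm
      _ ≤ #(K.erase u) + 1 := tsub_le_iff_right.1 pred_card_le_card_erase
      _ = #(K.subtype (· ∈ ({u}ᶜ : Set V))) + 1 := by simp [card_subtype, filter_ne']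
      _ ≤ (G.induce {u}ᶜ).cliqueNum + 1 := Nat.succ_le_succ hT.card_le_cliqueNum
  · obtain ⟨K, hK⟩ := (G.induce {u}ᶜ).exists_isNClique_cliqueNum
    have hL := ((isNClique_induce_iff _ K _).1 hK).insert (a := u) fun v hv => by
      obtain ⟨w, -, rfl⟩ := mem_map.1 hv
      exact hu (Ne.symm w.2)
    exact hL.card_eq.symm.trans_le hL.isClique.card_le_cliqueNum

lemma card_edgeFinset_eq_iff_of_isUniversal [Fintype V] [DecidableEq V] [DecidableRel G.Adj]
    {u : V} (hu : G.IsUniversal u) (j : ℕ) :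
    #G.edgeFinset = (j + 1).choose 2 + Fintype.card V - (j + 1) ↔
      #(G.induce {u}ᶜ).edgeFinset = j.choose 2 := by
  have hV : 0 < Fintype.card V := Fintype.card_pos_iff.2 ⟨u⟩
  rw [card_edgeFinset_eq_degree_add u, (degree_eq_card_sub_one G u).2 hu,
    Nat.choose_succ_succ' j 1, Nat.choose_one_right, one_add_one_eq_two]
  omega

end Universal

/-- If `G` is a `k`-chromatic graph of order `n` with a vertex of degree `n-1` and `x ≥ k`
is a natural number, then `π(G,x) = (x)_↓k · (x-1)^(n-k)` holds iff `G` is a connected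
`k`-chromatic graph of order `n` with exactly `C(k,2) + n - k` edges and clique number `k`. -/
theorem numColorings_eq_iff_of_universal_vertex {V : Type} [Fintype V] [DecidableEq V]
    (G : SimpleGraph V) [DecidableRel G.Adj] (n k : ℕ) (hn : Fintype.card V = n)
    (hk : G.chromaticNumber = k) (huniv : ∃ v : V, G.degree v = n - 1)
    (x : ℕ) (hx : k ≤ x) :
    numColorings G x = x.descFactorial k * (x - 1) ^ (n - k) ↔
      (G.Connected ∧ G.edgeFinset.card = k.choose 2 + n - k ∧ G.cliqueNum = k) := by
  subst hn
  obtain ⟨u, hdeg⟩ := huniv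
  have hu : G.IsUniversal u := (degree_eq_card_sub_one G u).1 hdeg
  have hV : Fintype.card V - 1 = Nat.card ({u}ᶜ : Set V) := by
    rw [← coe_singleton, natCard_coe_compl, card_singleton]
  obtain ⟨j, rfl, hH⟩ := exists_chromaticNumber_induce_compl_of_isUniversal hu hk
  obtain ⟨z, rfl⟩ : ∃ z, x = z + 1 := Nat.exists_eq_succ_of_ne_zero (by omega)
  calc numColorings G (z + 1) =
        (z + 1).descFactorial (j + 1) * (z + 1 - 1) ^ (Fintype.card V - (j + 1))
    _ ↔ Nat.card ((G.induce {u}ᶜ).Coloring (Fin z)) =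
          z.descFactorial j * z ^ (Nat.card ({u}ᶜ : Set V) - j) := by
        rw [numColorings_eq_card_coloring, card_coloring_fin_succ_of_isUniversal hu,
          Nat.succ_descFactorial_succ, mul_assoc, Nat.mul_right_inj z.succ_ne_zero, ← hV,
          Nat.sub_sub, Nat.add_comm 1, Nat.add_sub_cancel]
    _ ↔ #(G.induce {u}ᶜ).edgeFinset = j.choose 2 ∧ (G.induce {u}ᶜ).cliqueNum = j :=
        card_coloring_eq_iff_card_edgeFinset_cliqueNum hH (Nat.le_of_succ_le_succ hx)
    _ ↔ #G.edgeFinset = (j + 1).choose 2 + Fintype.card V - (j + 1) ∧ G.cliqueNum = j + 1 := by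
        rw [card_edgeFinset_eq_iff_of_isUniversal hu, cliqueNum_of_isUniversal hu, add_left_inj]
    _ ↔ _ := (and_iff_right (Connected.of_isUniversal hu)).symm
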